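/- Let f be continuous on [0,1] with modulus of uniform continuity ω_f, let n ≥ 1, set ζ = ε/(4(n+1)·20ⁿ·(n+2)^{2n}·nⁿ) and Φ(ε) = (ζ/2)·min{1/(10(n+2)²), ω_f(ζ/12), ζ/(24n²(n+1)²‖f‖₁)}. Then Φ is a modulus of uniqueness for best L¹-approximation of f by polynomials in 𝒬ₙ: if p₁, p₂ ∈ 𝒬ₙ are Φ(ε)-nearly best approximations to f in 𝒬ₙ, then ‖p₁−p₂‖₁ < ε. -/

import Mathlib

open Polynomial in
lemma aux_markov0 (n : ℕ) (p : Polynomial ℝ) (hp : p.natDegree ≤ n) (M : ℝ) (hM : 0 < M)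
    (hb : ∀ x ∈ Set.Icc (0:ℝ) 1, |p.eval x| ≤ M) (α β : ℝ)
    (hab : ∀ x ∈ Set.Icc (-1:ℝ) 1, α * x + β ∈ Set.Icc (0:ℝ) 1) :
    |α * (derivative p).eval (α + β)| ≤ (n:ℝ) ^ 2 * M := by
  have key : ∀ c : ℝ, |c| = 1 / M → c * (α * (derivative p).eval (α + β)) ≤ (n:ℝ) ^ 2 := by
    intro c hc
    set P : Polynomial ℝ := C c * p.comp (C α * X + C β) with hP
    have hd : P.degree ≤ n := by
      apply Polynomial.degree_le_of_natDegree_le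
      refine (natDegree_C_mul_le _ _).trans ?_
      refine natDegree_comp_le.trans ?_
      calc _ ≤ p.natDegree * 1 := Nat.mul_le_mul_left _ (natDegree_linear_le)
        _ ≤ n := by omega
    have h := Polynomial.Chebyshev.eval_iterate_derivative_le_of_forall_abs_le_one (k := 1)
      (x := 1) le_rfl hd (by
        intro x hx
        have := hb _ (hab x hx)
        simp only [hP, eval_mul, eval_C, eval_comp, eval_add, eval_X, abs_mul, hc]
        rw [div_mul_eq_mul_div, one_mul, div_le_one hM]
        exact this)
    simp only [Function.iterate_one, Polynomial.Chebyshev.derivative_T_eval_one] at h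
    have e : eval 1 (derivative P) = c * (α * (derivative p).eval (α + β)) := by
      simp [hP, derivative_comp]
    rw [e] at h
    simpa using h
  have h1 := key (1 / M) (abs_of_pos (by positivity))
  have h2 := key (-(1 / M)) (by rw [abs_neg, abs_of_pos (by positivity)])
  rw [abs_le]
  have e : ∀ z : ℝ, z = M * (1 / M * z) := by intro z; field_simp
  constructor
  · rw [e (α * _)]; nlinarith
  · rw [e (α * _)]; nlinarith

open Polynomial in
lemma aux_markov (n : ℕ) (p : Polynomial ℝ) (hp : p.natDegree ≤ n) (M : ℝ) (hM : 0 < M)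
    (hb : ∀ x ∈ Set.Icc (0:ℝ) 1, |p.eval x| ≤ M) :
    ∀ x ∈ Set.Icc (0:ℝ) 1, |(derivative p).eval x| ≤ 4 * (n:ℝ) ^ 2 * M := by
  intro x hx
  obtain ⟨hx0, hx1⟩ := hx
  rcases le_total (1/2) x with h | h
  · have := aux_markov0 n p hp M hM hb (x/2) (x/2) (by
      rintro y ⟨h1, h2⟩; constructor <;> nlinarith)
    rw [add_halves, abs_mul, abs_of_nonneg (by linarith : 0 ≤ x / 2)] at this
    nlinarith [abs_nonneg ((derivative p).eval x)]
  · have := aux_markov0 n p hp M hM hb (-((1-x)/2)) ((1+x)/2) (by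
      rintro y ⟨h1, h2⟩; constructor <;> nlinarith)
    rw [show -((1-x)/2) + (1+x)/2 = x by ring, abs_mul, abs_neg,
      abs_of_nonneg (by linarith : 0 ≤ (1-x) / 2)] at this
    nlinarith [abs_nonneg ((derivative p).eval x)]

open Polynomial in
lemma aux_antideriv (n : ℕ) (p : Polynomial ℝ) (hp : p.natDegree ≤ n) :
    ∃ F : Polynomial ℝ, F.natDegree ≤ n + 1 ∧ derivative F = p := by
  refine ⟨∑ i ∈ Finset.range (n+1), C (p.coeff i / (i+1)) * X ^ (i+1), ?_, ?_⟩
  · apply natDegree_sum_le_of_forall_le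
    intro i hi
    refine (natDegree_C_mul_X_pow_le _ _).trans ?_
    have := Finset.mem_range.1 hi
    omega
  · conv_rhs => rw [p.as_sum_range_C_mul_X_pow' (show p.natDegree < n + 1 by omega)]
    rw [derivative_sum]
    refine Finset.sum_congr rfl fun i _ => ?_
    rw [derivative_C_mul_X_pow]
    have : ((i:ℝ) + 1) ≠ 0 := by positivity
    congr 2
    push_cast
    field_simp

open Polynomial in
lemma aux_sup (n : ℕ) (p : Polynomial ℝ) (hp : p.natDegree ≤ n) (M : ℝ) (hM : 0 < M)
    (hb : ∫ x in (0:ℝ)..1, |p.eval x| ≤ M) :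
    ∀ x ∈ Set.Icc (0:ℝ) 1, |p.eval x| ≤ 2 * ((n:ℝ)+1) ^ 2 * M := by
  obtain ⟨F, hF, hFp⟩ := aux_antideriv n p hp
  have hint : ∀ u v : ℝ, ∫ x in u..v, p.eval x = F.eval v - F.eval u := by
    intro u v
    apply intervalIntegral.integral_eq_sub_of_hasDerivAt
    · intro x _
      rw [← hFp]; exact F.hasDerivAt x
    · exact p.continuous.intervalIntegrable _ _
  have habs : ∀ u v : ℝ, u ≤ v → |F.eval v - F.eval u| ≤ ∫ x in u..v, |p.eval x| := by
    intro u v huv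
    rw [← hint]; exact intervalIntegral.abs_integral_le_integral_abs huv
  have hc : Continuous fun x => |p.eval x| := p.continuous.abs
  set G : Polynomial ℝ := C 2 * F - C (F.eval 0 + F.eval 1) with hG
  have hGd : G.natDegree ≤ n + 1 := by
    refine (natDegree_sub_le _ _).trans ?_
    simp only [natDegree_C]
    have := natDegree_C_mul_le (2:ℝ) F
    omega
  intro x hx
  have := aux_markov (n+1) G hGd M hM (by
    intro y hy
    have h1 := habs 0 y hy.1
    have h2 := habs y 1 hy.2
    have h3 := intervalIntegral.integral_add_adjacent_intervals
      (hc.intervalIntegrable (μ := MeasureTheory.volume) 0 y) (hc.intervalIntegrable y 1)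
    simp only [hG, eval_sub, eval_mul, eval_C]
    rw [abs_le] at *
    constructor <;> linarith) x hx
  have e : (derivative G).eval x = 2 * p.eval x := by
    simp [hG, hFp]
  rw [e, abs_mul, abs_two] at this
  push_cast at this
  linarith

open Polynomial in
lemma aux_lip (n : ℕ) (p : Polynomial ℝ) (hp : p.natDegree ≤ n) (M : ℝ) (hM : 0 < M)
    (hb : ∫ x in (0:ℝ)..1, |p.eval x| ≤ M) (x y : ℝ) (hx : x ∈ Set.Icc (0:ℝ) 1)
    (hy : y ∈ Set.Icc (0:ℝ) 1) :
    |p.eval y - p.eval x| ≤ 8 * (n:ℝ) ^ 2 * ((n:ℝ)+1) ^ 2 * M * |y - x| := by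
  have h1 := aux_markov n p hp (2 * ((n:ℝ)+1) ^ 2 * M) (by positivity) (aux_sup n p hp M hM hb)
  have := Convex.norm_image_sub_le_of_norm_hasDerivWithin_le (f := fun x => p.eval x)
    (f' := fun x => (derivative p).eval x) (s := Set.Icc (0:ℝ) 1)
    (C := 8 * (n:ℝ) ^ 2 * ((n:ℝ)+1) ^ 2 * M)
    (fun z _ => (p.hasDerivAt z).hasDerivWithinAt)
    (fun z hz => by rw [Real.norm_eq_abs]; refine (h1 z hz).trans (le_of_eq (by ring)))
    (convex_Icc 0 1) hx hy
  simpa [Real.norm_eq_abs] using this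


open Polynomial in
lemma aux_roots (n : ℕ) (p : Polynomial ℝ) (hp : p.natDegree ≤ n) (s : ℝ) (hs : 0 < s) :
    ∃ R : Finset ℝ, R.card ≤ n ∧ ∀ x ∈ Set.Icc (0:ℝ) 1, (∀ r ∈ R, s ≤ |x - r|) →
      ∀ y ∈ Set.Icc (0:ℝ) 1, |p.eval y| ≤ ((1 + s) / s) ^ n * |p.eval x| := by
  classical
  set P : Polynomial ℂ := p.map (algebraMap ℝ ℂ) with hP
  have hcard : P.roots.card ≤ n := by
    refine (Polynomial.card_roots' P).trans ?_
    rw [hP]; exact natDegree_map_le.trans hp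
  have hev : ∀ x : ℝ, |p.eval x| = ‖P.leadingCoeff‖ * (P.roots.map fun z => ‖(x:ℂ) - z‖).prod := by
    intro x
    have h1 : P.eval (x:ℂ) = ((p.eval x : ℝ) : ℂ) := by
      rw [hP, eval_map_algebraMap]
      exact (Polynomial.aeval_algebraMap_apply_eq_algebraMap_eval x p)
    have h2 := (IsAlgClosed.splits P).eval_eq_prod_roots (x:ℂ)
    rw [h1] at h2
    have h3 := congrArg norm h2
    rw [Complex.norm_real, Real.norm_eq_abs, norm_mul] at h3
    rw [h3]
    congr 1
    have := map_multiset_prod (normHom (α := ℂ)) (P.roots.map fun z => (x:ℂ) - z)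
    simpa [Multiset.map_map, Function.comp_def] using this
  refine ⟨(P.roots.map Complex.re).toFinset, ?_, ?_⟩
  · refine (Multiset.toFinset_card_le _).trans ?_
    simpa using hcard
  intro x hx hr y hy
  have hr' : ∀ z ∈ P.roots, s ≤ ‖(x:ℂ) - z‖ := by
    intro z hz
    have h := hr z.re (by
      rw [Multiset.mem_toFinset]; exact Multiset.mem_map_of_mem _ hz)
    refine h.trans ?_
    simpa using Complex.abs_re_le_norm ((x:ℂ) - z)
  have hk : 1 ≤ (1 + s) / s := by rw [le_div_iff₀ hs]; linarith
  have gen : ∀ m : Multiset ℂ, (∀ z ∈ m, s ≤ ‖(x:ℂ) - z‖) →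
      (m.map fun z => ‖(y:ℂ) - z‖).prod ≤
        ((1 + s) / s) ^ (Multiset.card m) * (m.map fun z => ‖(x:ℂ) - z‖).prod := by
    intro m
    induction m using Multiset.induction_on with
    | empty => intro _; simp
    | cons z m ih =>
      intro hm
      have ih' := ih fun w hw => hm w (Multiset.mem_cons_of_mem hw)
      have hz := hm z (Multiset.mem_cons_self z m)
      simp only [Multiset.map_cons, Multiset.prod_cons, Multiset.card_cons]
      have h1 : ‖(y:ℂ) - z‖ ≤ (1 + s) / s * ‖(x:ℂ) - z‖ := by
        have h2 : ‖(y:ℂ) - z‖ ≤ ‖(y:ℂ) - x‖ + ‖(x:ℂ) - z‖ := norm_sub_le_norm_sub_add_norm_sub _ _ _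
        have h3 : ‖(y:ℂ) - x‖ ≤ 1 := by
          rw [← Complex.ofReal_sub, Complex.norm_real, Real.norm_eq_abs, abs_le]
          constructor <;> linarith [hx.1, hx.2, hy.1, hy.2]
        rw [div_mul_eq_mul_div, le_div_iff₀ hs]
        nlinarith
      have hnn : 0 ≤ (m.map fun z => ‖(y:ℂ) - z‖).prod :=
        Multiset.prod_nonneg (by intro a ha; obtain ⟨w, _, rfl⟩ := Multiset.mem_map.1 ha; positivity)
      calc _ ≤ ((1 + s) / s * ‖(x:ℂ) - z‖) *
          (((1 + s) / s) ^ (Multiset.card m) * (m.map fun z => ‖(x:ℂ) - z‖).prod) := by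
            gcongr
        _ = _ := by ring
  rw [hev, hev]
  have hnn : 0 ≤ (P.roots.map fun z => ‖(x:ℂ) - z‖).prod :=
        Multiset.prod_nonneg (by intro a ha; obtain ⟨w, _, rfl⟩ := Multiset.mem_map.1 ha; positivity)
  calc _ ≤ ‖P.leadingCoeff‖ * (((1 + s) / s) ^ n * (P.roots.map fun z => ‖(x:ℂ) - z‖).prod) := by
        gcongr
        refine (gen _ hr').trans ?_
        gcongr
    _ = _ := by ring

lemma aux_const (a : ℝ → ℝ) (u v : ℝ) (ha : ContinuousOn a (Set.Icc u v))
    (h0 : ∀ x ∈ Set.Icc u v, a x ≠ 0) :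
    ∃ η : ℝ, |η| = 1 ∧ ∀ x ∈ Set.Icc u v, 0 ≤ η * a x := by
  by_cases h : ∃ x ∈ Set.Icc u v, 0 < a x
  · obtain ⟨x, hx, hpos⟩ := h
    refine ⟨1, by simp, fun y hy => ?_⟩
    by_contra hneg
    obtain ⟨z, hz, hz0⟩ := isPreconnected_Icc.intermediate_value hy hx ha
      (show (0:ℝ) ∈ Set.Icc (a y) (a x) from ⟨by linarith, hpos.le⟩)
    exact h0 z hz hz0
  · push Not at h
    exact ⟨-1, by simp, fun y hy => by linarith [h y hy]⟩

lemma aux_sign (s : ℝ) (hs : 0 < s) (R : Finset ℝ) : ∀ (a : ℝ → ℝ) (v : ℝ),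
    ContinuousOn a (Set.Icc 0 v) →
    (∀ x ∈ Set.Icc 0 v, (∀ r ∈ R, s ≤ |x - r|) → a x ≠ 0) →
    ∃ T ⊆ R, ∃ η : ℝ, |η| = 1 ∧ ∀ x ∈ Set.Icc 0 v, (∀ r ∈ R, s ≤ |x - r|) →
      0 ≤ a x * (η * ∏ r ∈ T, (x - r)) := by
  classical
  induction R using Finset.induction_on_max with
  | empty =>
    intro a v ha h0
    obtain ⟨η, hη, h⟩ := aux_const a 0 v ha (fun x hx => h0 x hx (by simp))
    refine ⟨∅, subset_rfl, η, hη, fun x hx _ => ?_⟩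
    simpa [mul_comm] using h x hx
  | insert m R hm ih =>
    intro a v ha h0
    have hmR : m ∉ R := fun h => lt_irrefl _ (hm m h)
    obtain ⟨T, hT, η, hη, h⟩ := ih a (min v (m - s))
      (ha.mono (Set.Icc_subset_Icc_right (min_le_left _ _))) (by
        intro x hx hr
        have hx2 := le_min_iff.1 hx.2
        refine h0 x ⟨hx.1, hx2.1⟩ ?_
        intro r hr'
        rcases Finset.mem_insert.1 hr' with rfl | h'
        · rw [abs_sub_comm]; exact le_trans (by linarith) (le_abs_self _)
        · exact hr r h')
    obtain ⟨η', hη', h'⟩ := aux_const a (max 0 (m+s)) v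
      (ha.mono (Set.Icc_subset_Icc_left (le_max_left _ _))) (by
        intro x hx
        have hx1 := max_le_iff.1 hx.1
        refine h0 x ⟨hx1.1, hx.2⟩ ?_
        intro r hr'
        have : r ≤ m := by
          rcases Finset.mem_insert.1 hr' with rfl | h'
          · exact le_rfl
          · exact (hm r h').le
        exact le_trans (by linarith) (le_abs_self _))
    have hside : ∀ x ∈ Set.Icc 0 v, (∀ r ∈ insert m R, s ≤ |x - r|) →
        (x ∈ Set.Icc 0 (min v (m-s)) ∨ (m + s ≤ x ∧ x ∈ Set.Icc (max 0 (m+s)) v)) := by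
      intro x hx hr
      have := hr m (Finset.mem_insert_self _ _)
      rcases le_abs.1 this with h1 | h1
      · right; exact ⟨by linarith, max_le hx.1 (by linarith), hx.2⟩
      · left; exact ⟨hx.1, le_min hx.2 (by linarith)⟩
    have hprod : ∀ x, m + s ≤ x → 0 ≤ ∏ r ∈ T, (x - r) := by
      intro x hx
      refine Finset.prod_nonneg fun r hr => ?_
      have := hm r (hT hr)
      linarith
    have hcase : η' = η ∨ η' = -η := by
      have := hη'.trans hη.symm
      exact abs_eq_abs.1 this
    rcases hcase with rfl | rfl
    · refine ⟨T, hT.trans (Finset.subset_insert _ _), η', hη, ?_⟩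
      intro x hx hr
      rcases hside x hx hr with h1 | ⟨h1, h2⟩
      · exact h x h1 fun r h3 => hr r (Finset.mem_insert_of_mem h3)
      · have := mul_nonneg (h' x h2) (hprod x h1)
        linarith
    · refine ⟨insert m T, Finset.insert_subset_insert _ hT, -η, by simpa using hη, ?_⟩
      intro x hx hr
      rw [Finset.prod_insert (fun h => hmR (hT h))]
      rcases hside x hx hr with h1 | ⟨h1, h2⟩
      · have h4 := h x h1 fun r h3 => hr r (Finset.mem_insert_of_mem h3)
        have h5 : 0 ≤ m - x := by linarith [(le_min_iff.1 h1.2).2]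
        have := mul_nonneg h5 h4
        linarith
      · have := mul_nonneg (mul_nonneg (h' x h2) (hprod x h1)) (show 0 ≤ x - m by linarith)
        linarith

lemma aux_ind (r s : ℝ) (hs : 0 < s) :
    IntervalIntegrable ((Set.Ioo (r-s) (r+s)).indicator fun _ => (1:ℝ)) MeasureTheory.volume 0 1 ∧
    ∫ x in (0:ℝ)..1, (Set.Ioo (r-s) (r+s)).indicator (fun _ => (1:ℝ)) x ≤ 2 * s := by
  have hi : MeasureTheory.Integrable ((Set.Ioo (r-s) (r+s)).indicator fun _ => (1:ℝ)) := by
    rw [MeasureTheory.integrable_indicator_iff measurableSet_Ioo]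
    exact MeasureTheory.integrableOn_const (by simp) (by simp)
  refine ⟨hi.intervalIntegrable, ?_⟩
  rw [intervalIntegral.integral_of_le zero_le_one]
  refine (MeasureTheory.setIntegral_le_integral hi (Filter.Eventually.of_forall fun x =>
    Set.indicator_nonneg (fun _ _ => zero_le_one) x)).trans ?_
  rw [MeasureTheory.integral_indicator measurableSet_Ioo]
  simp [MeasureTheory.measureReal_def]
  rw [ENNReal.toReal_ofReal] <;> linarith

lemma aux_point (g : ℝ → ℝ) (hg : ContinuousOn g (Set.Icc 0 1)) (hg0 : ∀ x ∈ Set.Icc (0:ℝ) 1, 0 ≤ g x)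
    (δ ζ : ℝ) (hδ : 0 < δ) (hδ1 : δ ≤ 1/2)
    (hlt : ∫ x in (0:ℝ)..1, g x < ζ / 2 * δ) (x : ℝ) (hx : x ∈ Set.Icc (0:ℝ) 1) :
    ∃ y ∈ Set.Icc (0:ℝ) 1, |y - x| < δ ∧ g y < ζ / 2 := by
  by_contra hcon
  push Not at hcon
  obtain ⟨u, hu0, hu1, hu⟩ : ∃ u, 0 ≤ u ∧ u + δ ≤ 1 ∧ ∀ y ∈ Set.Ioo u (u+δ), |y - x| < δ := by
    rcases le_total x (1/2) with h | h
    · refine ⟨x, hx.1, by linarith, fun y hy => ?_⟩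
      rw [abs_lt]; constructor <;> linarith [hy.1, hy.2]
    · refine ⟨x - δ, by linarith, by linarith [hx.2], fun y hy => ?_⟩
      rw [abs_lt]; constructor <;> linarith [hy.1, hy.2]
  have hi : IntervalIntegrable g MeasureTheory.volume 0 1 :=
    hg.intervalIntegrable_of_Icc zero_le_one
  have hsub : Set.Icc u (u+δ) ⊆ Set.Icc 0 1 := Set.Icc_subset_Icc hu0 hu1
  have hi2 : IntervalIntegrable g MeasureTheory.volume u (u+δ) :=
    (hg.mono hsub).intervalIntegrable_of_Icc (by linarith)
  have h1 : ∫ y in u..(u+δ), g y ≤ ∫ y in (0:ℝ)..1, g y := by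
    apply intervalIntegral.integral_mono_interval hu0 (by linarith) hu1 _ hi
    refine (MeasureTheory.ae_restrict_iff' measurableSet_Ioc).2 (Filter.Eventually.of_forall ?_)
    intro y hy
    exact hg0 y ⟨hy.1.le, hy.2⟩
  have h2 : ∫ y in u..(u+δ), ζ/2 ≤ ∫ y in u..(u+δ), g y := by
    apply intervalIntegral.integral_mono_on_of_le_Ioo (by linarith) (by simp) hi2
    intro y hy
    exact hcon y (hsub ⟨hy.1.le, hy.2.le⟩) (hu y hy)
  rw [intervalIntegral.integral_const, smul_eq_mul] at h2
  nlinarith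

open Polynomial in
lemma aux_final (n : ℕ) (hn : 1 ≤ n) (a : ℝ → ℝ) (ha : ContinuousOn a (Set.Icc 0 1)) (ζ : ℝ)
    (hζ : 0 < ζ) (s : ℝ) (hs : s = 1 / (16 * (n:ℝ) * ((n:ℝ)+1)^2)) (Φ : ℝ)
    (hΦ : Φ ≤ ζ / 2 * (1 / (10 * ((n:ℝ) + 2) ^ 2)))
    (R : Finset ℝ) (hR : R.card ≤ n)
    (hbig : ∀ x ∈ Set.Icc (0:ℝ) 1, (∀ r ∈ R, s ≤ |x - r|) → ζ ≤ |a x|)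
    (hnear : ∀ q : Polynomial ℝ, q.natDegree ≤ n →
      ∫ x in (0:ℝ)..1, |a x| < (∫ x in (0:ℝ)..1, |a x - q.eval x|) + Φ) : False := by
  classical
  have hn' : (1:ℝ) ≤ n := by exact_mod_cast hn
  have hs0 : 0 < s := by rw [hs]; positivity
  obtain ⟨T, hT, η, hη, hsg⟩ := aux_sign s hs0 R a 1 ha (by
    intro x hx hr h0
    have := hbig x hx hr
    rw [h0, abs_zero] at this
    linarith)
  set h0 : Polynomial ℝ := C η * ∏ r ∈ T, (X - C r) with hh0
  have hη0 : η ≠ 0 := by intro h; simp [h] at hη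
  have hh00 : h0 ≠ 0 := by
    rw [hh0]
    exact mul_ne_zero (C_ne_zero.2 hη0) (Finset.prod_ne_zero_iff.2 fun r _ => X_sub_C_ne_zero r)
  have hdeg : h0.natDegree ≤ n := by
    refine (natDegree_C_mul_le _ _).trans ?_
    rw [natDegree_prod_of_monic _ _ (fun r _ => monic_X_sub_C r)]
    simp only [natDegree_X_sub_C, Finset.sum_const, smul_eq_mul, mul_one]
    exact (Finset.card_le_card hT).trans hR
  have hev : ∀ x, h0.eval x = η * ∏ r ∈ T, (x - r) := by
    intro x; simp [hh0, eval_prod]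
  have hpos : 0 < ∫ x in (0:ℝ)..1, |h0.eval x| := by
    have hnn : 0 ≤ ∫ x in (0:ℝ)..1, |h0.eval x| :=
      intervalIntegral.integral_nonneg zero_le_one fun x _ => abs_nonneg _
    refine lt_of_le_of_ne hnn fun heq => hh00 ?_
    apply Polynomial.eq_zero_of_infinite_isRoot
    apply (Set.Icc_infinite (zero_lt_one (α := ℝ))).mono
    intro x hx
    have hall : ∀ M : ℝ, 0 < M → |h0.eval x| ≤ 2 * ((n:ℝ)+1)^2 * M := fun M hM =>
      aux_sup n h0 hdeg M hM (by rw [← heq]; exact hM.le) x hx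
    by_contra hne
    have hp : 0 < |h0.eval x| := abs_pos.2 hne
    have := hall (|h0.eval x| / (4 * ((n:ℝ)+1)^2)) (by positivity)
    have e : 2 * ((n:ℝ)+1)^2 * (|h0.eval x| / (4 * ((n:ℝ)+1)^2)) = |h0.eval x| / 2 := by
      field_simp; norm_num
    linarith
  set I := ∫ x in (0:ℝ)..1, |h0.eval x| with hI
  set κ := 2 * ((n:ℝ)+1)^2 * I with hκ
  have hκ0 : 0 < κ := by positivity
  have hsup : ∀ x ∈ Set.Icc (0:ℝ) 1, |h0.eval x| ≤ κ := aux_sup n h0 hdeg I hpos le_rfl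
  have hq := hnear (C (ζ / κ) * h0) ((natDegree_C_mul_le _ _).trans hdeg)
  simp only [eval_mul, eval_C] at hq
  have hpt : ∀ x ∈ Set.Icc (0:ℝ) 1, |a x - ζ / κ * h0.eval x| ≤
      |a x| - ζ / κ * |h0.eval x| +
        2 * ζ * ∑ r ∈ R, (Set.Ioo (r-s) (r+s)).indicator (fun _ => (1:ℝ)) x := by
    intro x hx
    have hb : ζ / κ * |h0.eval x| ≤ ζ := by
      rw [div_mul_eq_mul_div, div_le_iff₀ hκ0]
      exact mul_le_mul_of_nonneg_left (hsup x hx) hζ.le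
    have hb0 : 0 < ζ / κ := by positivity
    have hSn : ∀ r ∈ R, 0 ≤ (Set.Ioo (r-s) (r+s)).indicator (fun _ => (1:ℝ)) x :=
      fun r _ => Set.indicator_nonneg (fun _ _ => zero_le_one) x
    by_cases hr : ∀ r ∈ R, s ≤ |x - r|
    · have h1 := hsg x hx hr
      rw [← hev] at h1
      have h2 := hbig x hx hr
      have h3 : |a x - ζ / κ * h0.eval x| = |a x| - ζ / κ * |h0.eval x| := by
        have h4 : |ζ / κ * h0.eval x| = ζ / κ * |h0.eval x| := by rw [abs_mul, abs_of_pos hb0]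
        rcases lt_trichotomy (a x) 0 with hneg | hz | hp
        · have h5 : h0.eval x ≤ 0 := by
            by_contra h6; push Not at h6; nlinarith
          rw [abs_of_neg hneg, abs_of_nonpos h5] at *
          rw [abs_of_nonpos (by linarith)]; ring
        · rw [hz, abs_zero] at h2; linarith
        · have h5 : 0 ≤ h0.eval x := by
            by_contra h6; push Not at h6; nlinarith
          rw [abs_of_pos hp, abs_of_nonneg h5] at *
          rw [abs_of_nonneg (by linarith)]
      rw [h3]
      have := Finset.sum_nonneg hSn
      nlinarith
    · push Not at hr
      obtain ⟨r, hrR, hlt⟩ := hr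
      have h1 : (1:ℝ) ≤ ∑ r ∈ R, (Set.Ioo (r-s) (r+s)).indicator (fun _ => (1:ℝ)) x := by
        refine le_trans ?_ (Finset.single_le_sum hSn hrR)
        rw [abs_lt] at hlt
        rw [Set.indicator_of_mem (by constructor <;> linarith)]
      have h2 : |a x - ζ / κ * h0.eval x| ≤ |a x| + ζ / κ * |h0.eval x| := by
        refine (abs_sub _ _).trans ?_
        rw [abs_mul, abs_of_pos hb0]
      nlinarith
  have ia : IntervalIntegrable (fun x => |a x|) MeasureTheory.volume 0 1 :=
    ha.abs.intervalIntegrable_of_Icc zero_le_one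
  have ih : IntervalIntegrable (fun x => ζ / κ * |h0.eval x|) MeasureTheory.volume 0 1 :=
    (continuous_const.mul h0.continuous.abs).intervalIntegrable _ _
  have is : IntervalIntegrable (fun x => 2 * ζ * ∑ r ∈ R,
      (Set.Ioo (r-s) (r+s)).indicator (fun _ => (1:ℝ)) x) MeasureTheory.volume 0 1 := by
    apply IntervalIntegrable.const_mul
    have := IntervalIntegrable.sum R (fun r _ => (aux_ind r s hs0).1)
    simpa [Finset.sum_fn] using this
  have id : IntervalIntegrable (fun x => |a x - ζ / κ * h0.eval x|) MeasureTheory.volume 0 1 :=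
    (ha.sub (continuous_const.mul h0.continuous).continuousOn).abs.intervalIntegrable_of_Icc
      zero_le_one
  have hle := intervalIntegral.integral_mono_on zero_le_one id ((ia.sub ih).add is) hpt
  rw [intervalIntegral.integral_add (ia.sub ih) is, intervalIntegral.integral_sub ia ih,
    intervalIntegral.integral_const_mul, intervalIntegral.integral_const_mul,
    intervalIntegral.integral_finsetSum (fun r _ => (aux_ind r s hs0).1), ← hI] at hle
  have hsum : ∑ r ∈ R, ∫ x in (0:ℝ)..1, (Set.Ioo (r-s) (r+s)).indicator (fun _ => (1:ℝ)) x
      ≤ n * (2 * s) := by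
    refine (Finset.sum_le_sum fun r _ => (aux_ind r s hs0).2).trans ?_
    rw [Finset.sum_const, nsmul_eq_mul]
    have : (R.card : ℝ) ≤ n := by exact_mod_cast hR
    gcongr
  have hkI : ζ / κ * I = ζ * (1 / (2 * ((n:ℝ)+1)^2)) := by
    rw [hκ]; field_simp
  have hns : (n:ℝ) * (2 * s) = 1 / (8 * ((n:ℝ)+1)^2) := by
    rw [hs]; field_simp; norm_num
  rw [hns] at hsum
  rw [hkI] at hle
  have h1 : 1 / (10 * ((n:ℝ) + 2) ^ 2) ≤ 1 / (8 * ((n:ℝ)+1)^2) := by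
    apply one_div_le_one_div_of_le (by positivity)
    nlinarith
  have h2 : 1 / (2 * ((n:ℝ)+1)^2) = 4 * (1 / (8 * ((n:ℝ)+1)^2)) := by field_simp; norm_num
  rw [h2] at hle
  have h3 : 0 < 1 / (8 * ((n:ℝ)+1)^2) := by positivity
  set w := 1 / (8 * ((n:ℝ)+1)^2)
  have h4 : 2 * ζ * (∑ r ∈ R, ∫ x in (0:ℝ)..1, (Set.Ioo (r-s) (r+s)).indicator (fun _ => (1:ℝ)) x)
      ≤ 2 * ζ * w := by gcongr
  have h5 : ζ / 2 * (1 / (10 * ((n:ℝ) + 2) ^ 2)) ≤ ζ / 2 * w := by gcongr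
  nlinarith [mul_pos hζ h3]

theorem stmt_11 (f : ℝ → ℝ) (n : ℕ) (hn : 1 ≤ n) (ωf : ℝ → ℝ) (ε : ℝ) (hε : 0 < ε)
    (hf : ContinuousOn f (Set.Icc 0 1))
    (hf1 : 0 < ∫ x in (0:ℝ)..1, |f x|)
    (hωf : ∀ e : ℝ, 0 < e → ∀ x ∈ Set.Icc (0:ℝ) 1, ∀ y ∈ Set.Icc (0:ℝ) 1,
      |x - y| < ωf e → |f x - f y| < e)
    (p₁ p₂ : Polynomial ℝ) (hp₁ : p₁.natDegree ≤ n) (hp₂ : p₂.natDegree ≤ n)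
    (hp₁Q : (∫ x in (0:ℝ)..1, |p₁.eval x|) ≤ 2 * ∫ x in (0:ℝ)..1, |f x|)
    (hp₂Q : (∫ x in (0:ℝ)..1, |p₂.eval x|) ≤ 2 * ∫ x in (0:ℝ)..1, |f x|)
    (ζ Φ : ℝ)
    (hζ : ζ = ε / ((4:ℝ) * ((n:ℝ) + 1) * 20 ^ n * ((n:ℝ) + 2) ^ (2 * n) * (n:ℝ) ^ n))
    (hΦ : Φ = (ζ / 2) * min (min (1 / (10 * ((n:ℝ) + 2) ^ 2)) (ωf (ζ / 12)))
      (ζ / (24 * (n:ℝ) ^ 2 * ((n:ℝ) + 1) ^ 2 * ∫ x in (0:ℝ)..1, |f x|)))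
    (hnear₁ : ∀ q : Polynomial ℝ, q.natDegree ≤ n →
      (∫ x in (0:ℝ)..1, |q.eval x|) ≤ 2 * (∫ x in (0:ℝ)..1, |f x|) →
      (∫ x in (0:ℝ)..1, |f x - p₁.eval x|) < (∫ x in (0:ℝ)..1, |f x - q.eval x|) + Φ)
    (hnear₂ : ∀ q : Polynomial ℝ, q.natDegree ≤ n →
      (∫ x in (0:ℝ)..1, |q.eval x|) ≤ 2 * (∫ x in (0:ℝ)..1, |f x|) →
      (∫ x in (0:ℝ)..1, |f x - p₂.eval x|) < (∫ x in (0:ℝ)..1, |f x - q.eval x|) + Φ) :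
    (∫ x in (0:ℝ)..1, |p₁.eval x - p₂.eval x|) < ε := by
  classical
  have hn' : (1:ℝ) ≤ n := by exact_mod_cast hn
  set N := ∫ x in (0:ℝ)..1, |f x| with hN
  by_contra hcon
  push Not at hcon
  have hζ0 : 0 < ζ := by rw [hζ]; positivity
  have hΦ0 : 0 < Φ := by have := hnear₁ p₁ hp₁ hp₁Q; linarith
  set δ := min (min (1 / (10 * ((n:ℝ) + 2) ^ 2)) (ωf (ζ / 12)))
      (ζ / (24 * (n:ℝ) ^ 2 * ((n:ℝ) + 1) ^ 2 * N)) with hδ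
  have hδ0 : 0 < δ := by
    rw [hΦ] at hΦ0
    exact pos_of_mul_pos_right hΦ0 (by positivity)
  have hδ1 : δ ≤ 1 / (10 * ((n:ℝ) + 2) ^ 2) := (min_le_left _ _).trans (min_le_left _ _)
  have hδ2 : δ ≤ ωf (ζ / 12) := (min_le_left _ _).trans (min_le_right _ _)
  have hδ3 : δ ≤ ζ / (24 * (n:ℝ) ^ 2 * ((n:ℝ) + 1) ^ 2 * N) := min_le_right _ _
  have hδ4 : δ ≤ 1 / 2 := by
    refine hδ1.trans ?_
    apply one_div_le_one_div_of_le (by norm_num)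
    nlinarith
  have ip : ∀ p : Polynomial ℝ, IntervalIntegrable (fun x => |p.eval x|)
      MeasureTheory.volume 0 1 := fun p => p.continuous.abs.intervalIntegrable _ _
  have cf : ∀ p : Polynomial ℝ, ContinuousOn (fun x => |f x - p.eval x|) (Set.Icc 0 1) :=
    fun p => (hf.sub p.continuous.continuousOn).abs
  have ifp : ∀ p : Polynomial ℝ, IntervalIntegrable (fun x => |f x - p.eval x|)
      MeasureTheory.volume 0 1 := fun p => (cf p).intervalIntegrable_of_Icc zero_le_one
  have iff0 : IntervalIntegrable (fun x => |f x|) MeasureTheory.volume 0 1 :=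
    hf.abs.intervalIntegrable_of_Icc zero_le_one
  set p0 : Polynomial ℝ := Polynomial.C (1/2) * (p₁ + p₂) with hp0
  set b : Polynomial ℝ := Polynomial.C (1/2) * (p₁ - p₂) with hb
  have e0 : ∀ x, p0.eval x = (p₁.eval x + p₂.eval x) / 2 := by intro x; simp [hp0]; ring
  have eb : ∀ x, b.eval x = (p₁.eval x - p₂.eval x) / 2 := by intro x; simp [hb]; ring
  have d0 : p0.natDegree ≤ n := (Polynomial.natDegree_C_mul_le _ _).trans
    ((Polynomial.natDegree_add_le _ _).trans (max_le hp₁ hp₂))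
  have db : b.natDegree ≤ n := (Polynomial.natDegree_C_mul_le _ _).trans
    ((Polynomial.natDegree_sub_le _ _).trans (max_le hp₁ hp₂))
  have havg : ∫ x in (0:ℝ)..1, (|p₁.eval x| + |p₂.eval x|) / 2 ≤ 2 * N := by
    rw [intervalIntegral.integral_div, intervalIntegral.integral_add (ip _) (ip _)]
    linarith
  have n0 : ∫ x in (0:ℝ)..1, |p0.eval x| ≤ 2 * N := by
    refine le_trans ?_ havg
    apply intervalIntegral.integral_mono_on zero_le_one (ip _) (((ip _).add (ip _)).div_const _)
    intro x _
    rw [e0, abs_div, abs_two]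
    have := abs_add_le (p₁.eval x) (p₂.eval x)
    linarith
  have nb : ∫ x in (0:ℝ)..1, |b.eval x| ≤ 2 * N := by
    refine le_trans ?_ havg
    apply intervalIntegral.integral_mono_on zero_le_one (ip _) (((ip _).add (ip _)).div_const _)
    intro x _
    rw [eb, abs_div, abs_two]
    have := abs_sub (p₁.eval x) (p₂.eval x)
    linarith
  -- the gap function
  set g : ℝ → ℝ := fun x => (|f x - p₁.eval x| + |f x - p₂.eval x|) / 2 - |f x - p0.eval x| with hg
  have cg : ContinuousOn g (Set.Icc 0 1) := (((cf p₁).add (cf p₂)).div_const 2).sub (cf p0)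
  have ea1 : ∀ x, f x - p₁.eval x = (f x - p0.eval x) - b.eval x := by
    intro x; rw [e0, eb]; ring
  have ea2 : ∀ x, f x - p₂.eval x = (f x - p0.eval x) + b.eval x := by
    intro x; rw [e0, eb]; ring
  have g0 : ∀ x ∈ Set.Icc (0:ℝ) 1, 0 ≤ g x := by
    intro x _
    simp only [hg, ea1 x, ea2 x]
    have := abs_add_le (f x - p0.eval x - b.eval x) (f x - p0.eval x + b.eval x)
    rw [show f x - p0.eval x - b.eval x + (f x - p0.eval x + b.eval x)
      = 2 * (f x - p0.eval x) by ring, abs_mul, abs_two] at this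
    linarith
  have gb : ∀ x, |b.eval x| - |f x - p0.eval x| ≤ g x := by
    intro x
    simp only [hg, ea1 x, ea2 x]
    have := abs_sub (f x - p0.eval x + b.eval x) (f x - p0.eval x - b.eval x)
    rw [show f x - p0.eval x + b.eval x - (f x - p0.eval x - b.eval x)
      = 2 * b.eval x by ring, abs_mul, abs_two] at this
    linarith
  have ig : ∫ x in (0:ℝ)..1, g x = ((∫ x in (0:ℝ)..1, |f x - p₁.eval x|)
      + ∫ x in (0:ℝ)..1, |f x - p₂.eval x|) / 2 - ∫ x in (0:ℝ)..1, |f x - p0.eval x| := by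
    simp only [hg]
    rw [intervalIntegral.integral_sub (((ifp _).add (ifp _)).div_const _) (ifp _),
      intervalIntegral.integral_div, intervalIntegral.integral_add (ifp _) (ifp _)]
  have hglt : ∫ x in (0:ℝ)..1, g x < ζ / 2 * δ := by
    rw [ig, ← hΦ]
    have h1 := hnear₁ p0 d0 n0
    have h2 := hnear₂ p0 d0 n0
    linarith
  have hgnn : 0 ≤ ∫ x in (0:ℝ)..1, g x := intervalIntegral.integral_nonneg zero_le_one g0
  have near0 : ∀ q : Polynomial ℝ, q.natDegree ≤ n →
      (∫ x in (0:ℝ)..1, |q.eval x|) ≤ 2 * N →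
      (∫ x in (0:ℝ)..1, |f x - p0.eval x|) < (∫ x in (0:ℝ)..1, |f x - q.eval x|) + Φ := by
    intro q hq hqN
    have h1 := hnear₁ q hq hqN
    have h2 := hnear₂ q hq hqN
    linarith
  have near : ∀ q : Polynomial ℝ, q.natDegree ≤ n →
      (∫ x in (0:ℝ)..1, |f x - p0.eval x|) < (∫ x in (0:ℝ)..1, |f x - q.eval x|) + Φ := by
    intro q hq
    by_cases hqN : (∫ x in (0:ℝ)..1, |q.eval x|) ≤ 2 * N
    · exact near0 q hq hqN
    · push Not at hqN
      have h0 := near0 0 (by simp) (by simp; linarith)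
      simp only [Polynomial.eval_zero, sub_zero] at h0
      rw [← hN] at h0
      have h1 : ∫ x in (0:ℝ)..1, |q.eval x| ≤ ∫ x in (0:ℝ)..1, (|f x - q.eval x| + |f x|) := by
        apply intervalIntegral.integral_mono_on zero_le_one (ip _) ((ifp _).add iff0)
        intro x _
        have := abs_sub (f x) (f x - q.eval x)
        rw [sub_sub_cancel] at this
        linarith
      rw [intervalIntegral.integral_add (ifp _) iff0, ← hN] at h1
      linarith
  -- pointwise bound
  have hpt : ∀ x ∈ Set.Icc (0:ℝ) 1, |b.eval x| ≤ |f x - p0.eval x| + 2 * ζ := by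
    intro x hx
    obtain ⟨y, hy, hyx, hgy⟩ := aux_point g cg g0 δ ζ hδ0 hδ4 hglt x hx
    have hK : 8 * (n:ℝ) ^ 2 * ((n:ℝ)+1) ^ 2 * (2 * N) * |y - x| ≤ 2 / 3 * ζ := by
      calc _ ≤ 8 * (n:ℝ) ^ 2 * ((n:ℝ)+1) ^ 2 * (2 * N) *
            (ζ / (24 * (n:ℝ) ^ 2 * ((n:ℝ) + 1) ^ 2 * N)) := by
              gcongr
              exact hyx.le.trans hδ3
        _ = 2 / 3 * ζ := by field_simp; norm_num
    have h1 := (aux_lip n p0 d0 (2 * N) (by linarith) n0 x y hx hy).trans hK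
    have h2 := (aux_lip n b db (2 * N) (by linarith) nb x y hx hy).trans hK
    have h3 := hωf (ζ / 12) (by positivity) y hy x hx (lt_of_lt_of_le hyx hδ2)
    have h4 := gb y
    have h5 : |b.eval x| ≤ |b.eval y| + 2 / 3 * ζ := by
      have := abs_sub (b.eval y) (b.eval y - b.eval x)
      rw [sub_sub_cancel] at this
      linarith
    have h6 : |f y - p0.eval y| ≤ |f x - p0.eval x| + ζ / 12 + 2 / 3 * ζ := by
      have e : f y - p0.eval y = (f x - p0.eval x) + (f y - f x) - (p0.eval y - p0.eval x) := by
        ring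
      rw [e]
      have t1 := abs_sub (f x - p0.eval x + (f y - f x)) (p0.eval y - p0.eval x)
      have t2 := abs_add_le (f x - p0.eval x) (f y - f x)
      linarith
    linarith
  obtain ⟨R, hR, hroots⟩ := aux_roots n (p₁ - p₂)
    ((Polynomial.natDegree_sub_le _ _).trans (max_le hp₁ hp₂))
    (1 / (16 * (n:ℝ) * ((n:ℝ)+1)^2)) (by positivity)
  refine aux_final n hn (fun x => f x - p0.eval x) (hf.sub p0.continuous.continuousOn) ζ hζ0 _ rfl
    Φ (by rw [hΦ]; gcongr) R hR ?_ ?_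
  · intro x hx hr
    have h1 := hroots x hx hr
    simp only [Polynomial.eval_sub] at h1
    set Kc := ((1 + 1 / (16 * (n:ℝ) * ((n:ℝ)+1)^2)) / (1 / (16 * (n:ℝ) * ((n:ℝ)+1)^2))) ^ n with hKc
    have h2 : ε ≤ Kc * |p₁.eval x - p₂.eval x| := by
      refine hcon.trans ?_
      have := intervalIntegral.integral_mono_on zero_le_one
        ((p₁.continuous.sub p₂.continuous).abs.intervalIntegrable (μ := MeasureTheory.volume) 0 1)
        (intervalIntegrable_const (c := Kc * |p₁.eval x - p₂.eval x|)) h1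
      simpa using this
    have h3 : Kc ≤ (20 * ((n:ℝ)+2)^2 * n) ^ n := by
      rw [hKc]
      have e : (1 + 1 / (16 * (n:ℝ) * ((n:ℝ)+1)^2)) / (1 / (16 * (n:ℝ) * ((n:ℝ)+1)^2))
        = 16 * (n:ℝ) * ((n:ℝ)+1)^2 + 1 := by field_simp
      rw [e]
      gcongr
      nlinarith [mul_pos (show (0:ℝ) < n by linarith) (show (0:ℝ) < n by linarith),
        pow_pos (show (0:ℝ) < n by linarith) 3]
    set W := (20 * ((n:ℝ)+2)^2 * n) ^ n with hW
    have hW0 : 0 < W := by positivity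
    have h4 : ε = ζ * (4 * ((n:ℝ)+1)) * W := by
      rw [hζ, hW, mul_pow, mul_pow, ← pow_mul]
      field_simp
    have h5 : ζ * (4 * ((n:ℝ)+1)) ≤ |p₁.eval x - p₂.eval x| := by
      have : ζ * (4 * ((n:ℝ)+1)) * W ≤ |p₁.eval x - p₂.eval x| * W := by
        rw [← h4]
        refine h2.trans ?_
        rw [mul_comm]
        gcongr
      exact le_of_mul_le_mul_right this hW0
    have h6 := hpt x hx
    rw [eb, abs_div, abs_two] at h6
    nlinarith
  · intro q hq
    have := near (p0 + q) ((Polynomial.natDegree_add_le _ _).trans (max_le d0 hq))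
    simpa only [Polynomial.eval_add, sub_add_eq_sub_sub] using this
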